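/- Let a, b, b', c be complex numbers with c not a nonpositive integer, and let x, y be real numbers with |x| < 1 and |y| < 1 such that |y/(y−1)| < 1. Then every Appell F₁ function can be written as an Appell F₃ function: F₁(a; b, b'; c; x, y) = (1−y)^{−b'} · F₃(a, c−a; b, b'; c; x, y/(y−1)). -/

import Mathlib

noncomputable def poch (a : ℂ) (n : ℕ) : ℂ := ∏ i ∈ Finset.range n, (a + i)

/-- Appell series F₁(a;b,b';c;x,y). -/
noncomputable def appellF1 (a b b' c x y : ℂ) : ℂ :=
  ∑' p : ℕ × ℕ, poch a (p.1 + p.2) * poch b p.1 * poch b' p.2 /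
    (p.1.factorial * p.2.factorial * poch c (p.1 + p.2)) * x ^ p.1 * y ^ p.2

/-- Appell series F₃(a,a';b,b';c;x,y). -/
noncomputable def appellF3 (a a' b b' c x y : ℂ) : ℂ :=
  ∑' p : ℕ × ℕ, poch a p.1 * poch a' p.2 * poch b p.1 * poch b' p.2 /
    (p.1.factorial * p.2.factorial * poch c (p.1 + p.2)) * x ^ p.1 * y ^ p.2

/-
Summing the `F₁` and `F₃` series over `n` first expresses both as series in `x` with the same
coefficients, whose `m`-th terms involve `₂F₁(a + m, b'; c + m; y)` and
`₂F₁(c - a, b'; c + m; y / (y - 1))` respectively. These correspond under Pfaff's transformation,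
because `(c + m) - (a + m) = c - a`. Pfaff's transformation itself holds for `‖y‖ < 1 / 2` by
rearranging an absolutely convergent double series, and extends to the convex set `‖y‖ < 1`,
`re y < 1 / 2`, which is where both sides converge, by the identity theorem.
-/

open Filter Topology Finset FormalMultilinearSeries
open Ring (multichoose)

section BinomialRing

variable {R : Type*} [CommRing R] [BinomialRing R]

lemma choose_mul_multichoose_add (r : R) (m n : ℕ) :
    ((m + n).choose n : R) * multichoose r (m + n) = multichoose r m * multichoose (r + m) n := by
  have h := Ring.choose_add_smul_choose (r + m - 1) m n
  rw [nsmul_eq_mul, show r + m - 1 + n = r + ↑(m + n) - 1 by push_cast; ring,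
    ← Ring.multichoose_eq, ← Ring.multichoose_eq,
    show r + ↑(m + n) - 1 = r + m + n - 1 by push_cast; ring, ← Ring.multichoose_eq] at h
  rw [h, mul_comm]

/- This is Chu-Vandermonde for `choose (-r + (s + n - 1)) n`, with every binomial coefficient
reflected. -/
lemma sum_antidiagonal_neg_one_pow_mul_multichoose (r s : R) (n : ℕ) :
    ∑ p ∈ antidiagonal n, (-1) ^ p.1 * multichoose r p.1 * multichoose (s + p.1) p.2 =
      multichoose (s - r) n := by
  rw [Ring.multichoose_eq, show s - r + n - 1 = -r + (s + n - 1) by ring,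
    Ring.add_choose_eq n (Commute.all _ _)]
  refine sum_congr rfl fun p hp => ?_
  rw [Ring.choose_neg', Ring.multichoose_eq (s + p.1), ← mem_antidiagonal.1 hp]
  simp [Int.negOnePow_def, Units.smul_def, add_assoc]

end BinomialRing

lemma tsum_sum_antidiagonal {A α : Type*} [AddCommMonoid A] [HasAntidiagonal A]
    [AddCommMonoid α] [TopologicalSpace α] [ContinuousAdd α] [T3Space α] {f : A × A → α}
    (hf : Summable f) : ∑' n, ∑ p ∈ antidiagonal n, f p = ∑' p, f p := by
  let e := HasAntidiagonal.sigmaAntidiagonalEquivProd (A := A)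
  have hfe : Summable fun q => f (e q) := e.summable_iff.2 hf
  rw [← e.tsum_eq f, hfe.tsum_sigma' fun n => (hasSum_fintype _).summable]
  exact tsum_congr fun n => by simpa [e] using (sum_coe_sort (antidiagonal n) f).symm

section RadiusOne

variable {𝕜 : Type*} [NontriviallyNormedField 𝕜]

lemma summable_norm_mul_pow_of_one_le_radius {u : ℕ → 𝕜}
    (hu : 1 ≤ (ofScalars 𝕜 u).radius) {r : ℝ} (hr₀ : 0 ≤ r) (hr : r < 1) :
    Summable fun n => ‖u n‖ * r ^ n := by
  lift r to NNReal using hr₀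
  simpa only [ofScalars_norm] using
    (ofScalars 𝕜 u).summable_norm_mul_pow (hu.trans_lt' (by exact_mod_cast hr))

lemma exists_norm_mul_pow_le_of_one_le_radius {u : ℕ → 𝕜}
    (hu : 1 ≤ (ofScalars 𝕜 u).radius) {r : ℝ} (hr₀ : 0 ≤ r) (hr : r < 1) :
    ∃ C > 0, ∀ n, ‖u n‖ * r ^ n ≤ C := by
  lift r to NNReal using hr₀
  simpa only [ofScalars_norm] using
    (ofScalars 𝕜 u).norm_mul_pow_le_of_lt_radius (hu.trans_lt' (by exact_mod_cast hr))

/- The factor `w (m + n)` grows slower than `r ^ (-(m + n))` for every `r < 1`, so it is absorbed by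
replacing `x` and `y` with `x / r` and `y / r`. -/
lemma summable_mul_pow_mul_pow_of_norm_le [CompleteSpace 𝕜] {A : ℕ × ℕ → 𝕜} {u v w : ℕ → 𝕜}
    (hu : 1 ≤ (ofScalars 𝕜 u).radius) (hv : 1 ≤ (ofScalars 𝕜 v).radius)
    (hw : 1 ≤ (ofScalars 𝕜 w).radius)
    (hA : ∀ p, ‖A p‖ ≤ ‖u p.1‖ * ‖v p.2‖ * ‖w (p.1 + p.2)‖) {x y : 𝕜}
    (hx : ‖x‖ < 1) (hy : ‖y‖ < 1) :
    Summable fun p : ℕ × ℕ => A p * x ^ p.1 * y ^ p.2 := by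
  obtain ⟨r, hxyr, hr⟩ := exists_between (max_lt hx hy)
  obtain ⟨hxr, hyr⟩ := max_lt_iff.1 hxyr
  have hr₀ : 0 < r := (norm_nonneg x).trans_lt hxr
  obtain ⟨C, -, hC⟩ := exists_norm_mul_pow_le_of_one_le_radius hw hr₀.le hr
  have hsum {f : ℕ → 𝕜} (hf : 1 ≤ (ofScalars 𝕜 f).radius) {z : 𝕜} (hz : ‖z‖ < r) :
      Summable fun n => ‖f n‖ * (‖z‖ / r) ^ n :=
    summable_norm_mul_pow_of_one_le_radius hf (by positivity) ((div_lt_one hr₀).2 hz)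
  refine .of_norm_bounded (((hsum hu hxr).mul_of_nonneg (hsum hv hyr) (fun n => by positivity)
    fun n => by positivity).mul_left C) fun p => ?_
  calc ‖A p * x ^ p.1 * y ^ p.2‖
      ≤ ‖u p.1‖ * ‖v p.2‖ * ‖w (p.1 + p.2)‖ * ‖x‖ ^ p.1 * ‖y‖ ^ p.2 := by
        rw [norm_mul, norm_mul, norm_pow, norm_pow]
        gcongr
        exact hA p
    _ = ‖w (p.1 + p.2)‖ * r ^ (p.1 + p.2) *
        (‖u p.1‖ * (‖x‖ / r) ^ p.1 * (‖v p.2‖ * (‖y‖ / r) ^ p.2)) := by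
        rw [div_pow, div_pow, pow_add]
        field
    _ ≤ C * (‖u p.1‖ * (‖x‖ / r) ^ p.1 * (‖v p.2‖ * (‖y‖ / r) ^ p.2)) := by
        gcongr
        exact hC _

end RadiusOne

lemma poch_eq_ascPochhammer_eval (a : ℂ) (n : ℕ) : poch a n = (ascPochhammer ℂ n).eval a := by
  induction n with
  | zero => simp [poch]
  | succ n ih => rw [ascPochhammer_succ_eval, ← ih, poch, prod_range_succ, poch]

lemma poch_one (n : ℕ) : poch 1 n = n.factorial := by
  rw [poch_eq_ascPochhammer_eval, ascPochhammer_eval_one]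

lemma poch_add (a : ℂ) (m n : ℕ) : poch a (m + n) = poch a m * poch (a + m) n := by
  simp only [poch, prod_range_add, Nat.cast_add, add_assoc]

lemma poch_ne_zero {c : ℂ} (hc : ∀ n : ℕ, c ≠ -n) (n : ℕ) : poch c n ≠ 0 :=
  prod_ne_zero_iff.2 fun i _ h => hc i (eq_neg_of_add_eq_zero_left h)

lemma multichoose_eq_poch_div_factorial (a : ℂ) (n : ℕ) :
    multichoose a n = poch a n / n.factorial := by
  rw [eq_div_iff (Nat.cast_ne_zero.2 n.factorial_ne_zero), mul_comm, ← nsmul_eq_mul,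
    Ring.factorial_nsmul_multichoose_eq_ascPochhammer, Polynomial.ascPochhammer_smeval_eq_eval,
    poch_eq_ascPochhammer_eval]

lemma sum_antidiagonal_poch_div_poch (a : ℂ) {c : ℂ} (hc : ∀ n : ℕ, c ≠ -n) (n : ℕ) :
    ∑ p ∈ antidiagonal n, (-1) ^ p.1 * (n.choose p.2 : ℂ) * (poch (c - a) p.1 / poch c p.1) =
      poch a n / poch c n := by
  have hmulti (k : ℕ) : multichoose c k ≠ 0 := by
    rw [multichoose_eq_poch_div_factorial]
    exact div_ne_zero (poch_ne_zero hc k) (Nat.cast_ne_zero.2 k.factorial_ne_zero)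
  have hratio (s : ℂ) (k : ℕ) : poch s k / poch c k = multichoose s k / multichoose c k := by
    simp only [multichoose_eq_poch_div_factorial]
    rw [div_div_div_cancel_right₀ (Nat.cast_ne_zero.2 k.factorial_ne_zero)]
  rw [hratio, eq_div_iff (hmulti n), sum_mul, ← sub_sub_cancel c a,
    ← sum_antidiagonal_neg_one_pow_mul_multichoose, sub_sub_cancel]
  refine sum_congr rfl fun p hp => ?_
  have h := choose_mul_multichoose_add c p.1 p.2
  rw [mem_antidiagonal.1 hp] at h
  rw [hratio, mul_div_assoc', div_mul_eq_mul_div, div_eq_iff (hmulti p.1)]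
  linear_combination (-1) ^ p.1 * multichoose (c - a) p.1 * h

lemma hasSum_multichoose_mul_pow (a : ℂ) {y : ℂ} (hy : ‖y‖ < 1) :
    HasSum (fun n : ℕ => multichoose a n * y ^ n) ((1 - y) ^ (-a)) := by
  have h := (Complex.one_div_one_sub_cpow_hasFPowerSeriesOnBall_zero a).hasSum (y := y)
    (by simpa [← ENNReal.ofReal_one, Metric.eball_ofReal] using hy)
  simpa only [ofScalars_apply_eq, zero_add, smul_eq_mul, ← Ring.multichoose_eq, one_div,
    ← Complex.cpow_neg] using h

lemma one_le_radius_ordinaryHypergeometricSeries {𝕂 : Type*} (𝔸 : Type*) [RCLike 𝕂]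
    [NormedDivisionRing 𝔸] [NormedAlgebra 𝕂 𝔸] (a b c : 𝕂) :
    1 ≤ (ordinaryHypergeometricSeries 𝔸 a b c).radius := by
  by_cases habc : ∀ k : ℕ, (k : 𝕂) ≠ -a ∧ (k : 𝕂) ≠ -b ∧ (k : 𝕂) ≠ -c
  · exact (ordinaryHypergeometricSeries_radius_eq_one 𝔸 a b c habc).ge
  · have hneg : ∃ k : ℕ, a = -k ∨ b = -k ∨ c = -k := by
      simpa [not_and_or, ← or_iff_not_imp_left, eq_neg_iff_add_eq_zero, add_comm] using habc
    obtain ⟨k, rfl | rfl | rfl⟩ := hneg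
    · simp [ordinaryHypergeometric_radius_top_of_neg_nat₁]
    · simp [ordinaryHypergeometric_radius_top_of_neg_nat₂]
    · simp [ordinaryHypergeometric_radius_top_of_neg_nat₃]

lemma analyticOnNhd_ordinaryHypergeometric (a b c : ℂ) :
    AnalyticOnNhd ℂ (₂F₁ a b c : ℂ → ℂ) (Metric.ball 0 1) := by
  have hradius := one_le_radius_ordinaryHypergeometricSeries ℂ a b c
  refine ((ordinaryHypergeometricSeries ℂ a b c).hasFPowerSeriesOnBall
    (zero_lt_one.trans_le hradius)).analyticOnNhd.mono ?_
  rw [← Metric.eball_ofReal, ENNReal.ofReal_one]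
  exact Metric.eball_subset_eball hradius

lemma ordinaryHypergeometricCoefficient_eq_poch (a b c : ℂ) (n : ℕ) :
    ordinaryHypergeometricCoefficient a b c n =
      poch a n * poch b n / (n.factorial * poch c n) := by
  simp only [ordinaryHypergeometricCoefficient, poch_eq_ascPochhammer_eval]
  field

lemma ordinaryHypergeometric_eq_tsum_poch (a b c y : ℂ) :
    ₂F₁ a b c y = ∑' n : ℕ, poch a n * poch b n / (n.factorial * poch c n) * y ^ n := by
  simp only [ordinaryHypergeometric_eq_tsum, ← ordinaryHypergeometricCoefficient_eq_poch,
    smul_eq_mul]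

lemma one_le_radius_ofScalars_poch (a b c : ℂ) :
    1 ≤ (ofScalars ℂ fun n => poch a n * poch b n / (n.factorial * poch c n)).radius := by
  simpa only [ordinaryHypergeometricSeries,
    funext (ordinaryHypergeometricCoefficient_eq_poch a b c)] using
    one_le_radius_ordinaryHypergeometricSeries ℂ a b c

lemma one_le_radius_ofScalars_poch_div_poch (a c : ℂ) :
    1 ≤ (ofScalars ℂ fun n => poch a n / poch c n).radius := by
  convert one_le_radius_ofScalars_poch a 1 c using 4 with n
  rw [poch_one, mul_comm, mul_div_mul_left _ _ (Nat.cast_ne_zero.2 n.factorial_ne_zero)]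

lemma one_le_radius_ofScalars_multichoose (a : ℂ) :
    1 ≤ (ofScalars ℂ (multichoose a)).radius := by
  simpa only [poch_one, ← multichoose_eq_poch_div_factorial] using
    one_le_radius_ofScalars_poch_div_poch a 1

lemma summable_choose_mul_multichoose (b : ℂ) {u : ℕ → ℂ} (hu : 1 ≤ (ofScalars ℂ u).radius)
    {y : ℂ} (hy : ‖y‖ < 1 / 2) :
    Summable fun p : ℕ × ℕ => (-1) ^ p.1 * ((p.1 + p.2).choose p.2 : ℂ) * u p.1 *
      multichoose b (p.1 + p.2) * y ^ (p.1 + p.2) := by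
  let A (p : ℕ × ℕ) : ℂ :=
    (p.1 + p.2).choose p.2 / 2 ^ (p.1 + p.2) * u p.1 * multichoose b (p.1 + p.2)
  have hA (p : ℕ × ℕ) : ‖A p‖ ≤ ‖u p.1‖ * ‖multichoose (1 : ℂ) p.2‖ *
      ‖multichoose b (p.1 + p.2)‖ := by
    have hchoose : ((p.1 + p.2).choose p.2 : ℝ) / 2 ^ (p.1 + p.2) ≤ 1 :=
      div_le_one_of_le₀ (by exact_mod_cast Nat.choose_le_two_pow _ _) (by positivity)
    simp only [A, norm_mul, norm_div, norm_pow, Complex.norm_natCast, Complex.norm_ofNat,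
      Ring.multichoose_one, norm_one, mul_one]
    gcongr
    exact mul_le_of_le_one_left (norm_nonneg _) hchoose
  have hnorm : ‖2 * y‖ < 1 := by rw [norm_mul, Complex.norm_ofNat]; linarith
  refine (summable_mul_pow_mul_pow_of_norm_le hu (one_le_radius_ofScalars_multichoose 1)
    (one_le_radius_ofScalars_multichoose b) hA (x := -(2 * y)) (y := 2 * y)
    (by rwa [norm_neg]) hnorm).congr fun p => ?_
  rw [neg_pow, mul_pow, mul_pow]
  field

lemma one_sub_cpow_mul_div_pow (b : ℂ) {y : ℂ} (hy : y ≠ 1) (n : ℕ) :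
    (1 - y) ^ (-b) * (y / (y - 1)) ^ n = (-y) ^ n * (1 - y) ^ (-(b + n)) := by
  have hy₀ : 1 - y ≠ 0 := sub_ne_zero.2 hy.symm
  rw [neg_add, ← sub_eq_add_neg, Complex.cpow_sub _ _ hy₀, Complex.cpow_natCast,
    ← neg_div_neg_eq, neg_sub, div_pow]
  ring

/- Euler's transformation of series: the left side is a double series over `(i, n - i)`, which the
binomial series sums along each row `i` to `(-y) ^ i * (1 - y) ^ (-(b + i))`. -/
lemma tsum_binomialTransform_mul_multichoose (b : ℂ) {u : ℕ → ℂ}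
    (hu : 1 ≤ (ofScalars ℂ u).radius) {y : ℂ} (hy : ‖y‖ < 1 / 2) :
    ∑' n, (∑ p ∈ antidiagonal n, (-1) ^ p.1 * (n.choose p.2 : ℂ) * u p.1) *
        multichoose b n * y ^ n =
      (1 - y) ^ (-b) * ∑' n, u n * multichoose b n * (y / (y - 1)) ^ n := by
  have hy₁ : ‖y‖ < 1 := by linarith
  have hne : y ≠ 1 := by rintro rfl; simp at hy₁
  let t (p : ℕ × ℕ) : ℂ := (-1) ^ p.1 * ((p.1 + p.2).choose p.2 : ℂ) * u p.1 *
    multichoose b (p.1 + p.2) * y ^ (p.1 + p.2)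
  have ht : Summable t := summable_choose_mul_multichoose b hu hy
  have hrow (i : ℕ) : ∑' j, t (i, j) =
      (1 - y) ^ (-b) * (u i * multichoose b i * (y / (y - 1)) ^ i) := by
    calc ∑' j, t (i, j)
        = ∑' j, (-y) ^ i * u i * multichoose b i * (multichoose (b + i) j * y ^ j) := by
          refine tsum_congr fun j => ?_
          simp only [t]
          rw [neg_pow, pow_add]
          linear_combination
            (-1) ^ i * u i * y ^ i * y ^ j * choose_mul_multichoose_add b i j
      _ = (-y) ^ i * u i * multichoose b i * (1 - y) ^ (-(b + i)) := by
          rw [tsum_mul_left, (hasSum_multichoose_mul_pow (b + i) hy₁).tsum_eq]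
      _ = _ := by linear_combination -(u i * multichoose b i) * one_sub_cpow_mul_div_pow b hne i
  calc ∑' n, (∑ p ∈ antidiagonal n, (-1) ^ p.1 * (n.choose p.2 : ℂ) * u p.1) *
        multichoose b n * y ^ n
      = ∑' n, ∑ p ∈ antidiagonal n, t p := by
        refine tsum_congr fun n => ?_
        rw [sum_mul, sum_mul]
        refine sum_congr rfl fun p hp => ?_
        simp only [t, mem_antidiagonal.1 hp]
    _ = ∑' i, ∑' j, t (i, j) := by rw [tsum_sum_antidiagonal ht, ht.tsum_prod]
    _ = _ := by rw [tsum_congr hrow, tsum_mul_left]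

lemma ordinaryHypergeometric_pfaff_of_norm_lt_half (a b : ℂ) {c y : ℂ} (hc : ∀ n : ℕ, c ≠ -n)
    (hy : ‖y‖ < 1 / 2) :
    ₂F₁ a b c y = (1 - y) ^ (-b) * ₂F₁ (c - a) b c (y / (y - 1)) := by
  have hcoeff (s : ℂ) (n : ℕ) : poch s n * poch b n / (n.factorial * poch c n) =
      poch s n / poch c n * multichoose b n := by
    rw [multichoose_eq_poch_div_factorial]
    field
  simp only [ordinaryHypergeometric_eq_tsum_poch, hcoeff]
  rw [← tsum_binomialTransform_mul_multichoose b
    (one_le_radius_ofScalars_poch_div_poch (c - a) c) hy]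
  simp only [sum_antidiagonal_poch_div_poch a hc]

lemma norm_div_sub_one_lt_one_iff {y : ℂ} (hy : y ≠ 1) : ‖y / (y - 1)‖ < 1 ↔ y.re < 1 / 2 := by
  rw [norm_div, div_lt_one (norm_pos_iff.2 (sub_ne_zero.2 hy)), ← sq_lt_sq₀ (norm_nonneg _)
    (norm_nonneg _), Complex.sq_norm, Complex.sq_norm, Complex.normSq_apply, Complex.normSq_apply,
    Complex.sub_re, Complex.sub_im, Complex.one_re, Complex.one_im]
  constructor <;> intro h <;> linarith

theorem ordinaryHypergeometric_pfaff (a b : ℂ) {c y : ℂ} (hc : ∀ n : ℕ, c ≠ -n) (hy : ‖y‖ < 1)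
    (hy' : ‖y / (y - 1)‖ < 1) :
    ₂F₁ a b c y = (1 - y) ^ (-b) * ₂F₁ (c - a) b c (y / (y - 1)) := by
  let U : Set ℂ := Metric.ball 0 1 ∩ {z | z.re < 1 / 2}
  have hne {z : ℂ} (hz : z ∈ U) : z ≠ 1 := by rintro rfl; simp [U] at hz
  have hU : IsPreconnected U :=
    ((convex_ball 0 1).inter (convex_halfSpace_re_lt _)).isPreconnected
  have hleft : AnalyticOnNhd ℂ (₂F₁ a b c : ℂ → ℂ) U :=
    (analyticOnNhd_ordinaryHypergeometric a b c).mono Set.inter_subset_left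
  have hright : AnalyticOnNhd ℂ
      (fun z => (1 - z) ^ (-b) * ₂F₁ (c - a) b c (z / (z - 1))) U := by
    intro z hz
    have hslit : 1 - z ∈ Complex.slitPlane := by
      refine .inl ?_
      rw [Complex.sub_re, Complex.one_re]
      linarith [hz.2.out]
    have hmem : z / (z - 1) ∈ Metric.ball (0 : ℂ) 1 :=
      mem_ball_zero_iff.2 ((norm_div_sub_one_lt_one_iff (hne hz)).2 hz.2)
    exact ((analyticAt_const.sub analyticAt_id).cpow analyticAt_const hslit).mul
      ((analyticOnNhd_ordinaryHypergeometric (c - a) b c _ hmem).comp_of_eq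
        (analyticAt_id.div (analyticAt_id.sub analyticAt_const) (sub_ne_zero.2 (hne hz))) rfl)
  have hnear : ∀ᶠ z in 𝓝 (0 : ℂ), ₂F₁ a b c z =
      (1 - z) ^ (-b) * ₂F₁ (c - a) b c (z / (z - 1)) := by
    filter_upwards [Metric.ball_mem_nhds (0 : ℂ) one_half_pos] with z hz
    exact ordinaryHypergeometric_pfaff_of_norm_lt_half a b hc (mem_ball_zero_iff.1 hz)
  have hyne : y ≠ 1 := by rintro rfl; simp at hy
  exact hleft.eqOn_of_preconnected_of_eventuallyEq hright hU (by simp [U]) hnear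
    ⟨mem_ball_zero_iff.2 hy, (norm_div_sub_one_lt_one_iff hyne).1 hy'⟩

lemma summable_appellF1 (a b b' c : ℂ) {x y : ℂ} (hx : ‖x‖ < 1) (hy : ‖y‖ < 1) :
    Summable fun p : ℕ × ℕ => poch a (p.1 + p.2) * poch b p.1 * poch b' p.2 /
      (p.1.factorial * p.2.factorial * poch c (p.1 + p.2)) * x ^ p.1 * y ^ p.2 := by
  refine summable_mul_pow_mul_pow_of_norm_le (one_le_radius_ofScalars_multichoose b)
    (one_le_radius_ofScalars_multichoose b') (one_le_radius_ofScalars_poch_div_poch a c)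
    (fun p => ?_) hx hy
  rw [← norm_mul, ← norm_mul, multichoose_eq_poch_div_factorial, multichoose_eq_poch_div_factorial]
  refine (congrArg norm ?_).le
  field

lemma summable_appellF3 (a a' b b' c : ℂ) {x y : ℂ} (hx : ‖x‖ < 1) (hy : ‖y‖ < 1) :
    Summable fun p : ℕ × ℕ => poch a p.1 * poch a' p.2 * poch b p.1 * poch b' p.2 /
      (p.1.factorial * p.2.factorial * poch c (p.1 + p.2)) * x ^ p.1 * y ^ p.2 := by
  refine summable_mul_pow_mul_pow_of_norm_le (one_le_radius_ofScalars_poch a b 1)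
    (one_le_radius_ofScalars_poch a' b' 1) (one_le_radius_ofScalars_poch_div_poch 1 c)
    (fun p => ?_) hx hy
  have hfactorial : (p.1.factorial * p.2.factorial : ℝ) ≤ (p.1 + p.2).factorial := by
    exact_mod_cast Nat.le_of_dvd (Nat.factorial_pos _)
      (Nat.factorial_mul_factorial_dvd_factorial_add _ _)
  simp only [poch_one, norm_mul, norm_div, Complex.norm_natCast]
  calc ‖poch a p.1‖ * ‖poch a' p.2‖ * ‖poch b p.1‖ * ‖poch b' p.2‖ /
        (p.1.factorial * p.2.factorial * ‖poch c (p.1 + p.2)‖)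
      = ‖poch a p.1‖ * ‖poch b p.1‖ / (p.1.factorial * p.1.factorial) *
          (‖poch a' p.2‖ * ‖poch b' p.2‖ / (p.2.factorial * p.2.factorial)) *
          (p.1.factorial * p.2.factorial / ‖poch c (p.1 + p.2)‖) := by field
    _ ≤ _ := by gcongr

lemma appellF1_eq_tsum_ordinaryHypergeometric (a b b' c : ℂ) {x y : ℂ} (hx : ‖x‖ < 1)
    (hy : ‖y‖ < 1) :
    appellF1 a b b' c x y = ∑' m : ℕ, poch a m * poch b m / (m.factorial * poch c m) * x ^ m *
      ₂F₁ (a + m) b' (c + m) y := by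
  rw [appellF1, (summable_appellF1 a b b' c hx hy).tsum_prod]
  simp only [ordinaryHypergeometric_eq_tsum_poch, ← tsum_mul_left, poch_add]
  refine tsum_congr fun m => tsum_congr fun n => ?_
  field

lemma appellF3_eq_tsum_ordinaryHypergeometric (a a' b b' c : ℂ) {x y : ℂ} (hx : ‖x‖ < 1)
    (hy : ‖y‖ < 1) :
    appellF3 a a' b b' c x y = ∑' m : ℕ, poch a m * poch b m / (m.factorial * poch c m) * x ^ m *
      ₂F₁ a' b' (c + m) y := by
  rw [appellF3, (summable_appellF3 a a' b b' c hx hy).tsum_prod]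
  simp only [ordinaryHypergeometric_eq_tsum_poch, ← tsum_mul_left, poch_add]
  refine tsum_congr fun m => tsum_congr fun n => ?_
  field

theorem appellF1_eq_appellF3_general (a b b' : ℂ) {c x y : ℂ} (hc : ∀ n : ℕ, c ≠ -n)
    (hx : ‖x‖ < 1) (hy : ‖y‖ < 1) (hy' : ‖y / (y - 1)‖ < 1) :
    appellF1 a b b' c x y =
      (1 - y) ^ (-b') * appellF3 a (c - a) b b' c x (y / (y - 1)) := by
  rw [appellF1_eq_tsum_ordinaryHypergeometric a b b' c hx hy,
    appellF3_eq_tsum_ordinaryHypergeometric a (c - a) b b' c hx hy', ← tsum_mul_left]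
  refine tsum_congr fun m => ?_
  have hcm (n : ℕ) : c + m ≠ -n := fun h => hc (m + n) (by push_cast; linear_combination h)
  rw [ordinaryHypergeometric_pfaff (a + m) b' hcm hy hy', add_sub_add_right_eq_sub]
  ring

theorem appellF1_eq_appellF3 (a b b' c : ℂ) (x y : ℝ)
    (hc : ∀ n : ℕ, c ≠ -(n : ℂ))
    (hx : |x| < 1) (hy : |y| < 1) (hy' : |y / (y - 1)| < 1) :
    appellF1 a b b' c x y =
      ((1 : ℂ) - y) ^ (-b') * appellF3 a (c - a) b b' c x ((y : ℂ) / (y - 1)) :=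
  appellF1_eq_appellF3_general a b b' hc (by simpa using hx) (by simpa using hy)
    (by rw [← Real.norm_eq_abs, ← Complex.norm_real] at hy'; exact_mod_cast hy')
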